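/- For every real number t > 0, the function x ↦ e^{ψ(x+t)} - x is decreasing and convex on (0, ∞); moreover it tends to e^{ψ(t)} as x → 0⁺ and tends to t - 1/2 as x → ∞, so its range on (0,∞) is the interval (t - 1/2, e^{ψ(t)}). -/

import Mathlib

open Real Filter

/-- The digamma (psi) function, the derivative of `log ∘ Γ`. -/
noncomputable def digamma : ℝ → ℝ :=
  deriv fun x : ℝ => Real.log (Real.Gamma x)

/-!
Write `g x = e^{ψ x} - x`, so that the function in question is `g (x + t) + t`.

* Convexity of `e^f` amounts to `(f')² + f'' ≥ 0`. Together with `f' x ≥ 1/x + 1/(2x²)`, this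
  inequality is inherited by `x ↦ f (x + 1) - 1/x`, and `ψ` is a fixed point of this operation.
  Iterating from `log x - 1/(2x)` gives approximations converging to `ψ` on `(0, ∞)`, and
  convexity of `e^f` survives in the limit.
* From `ψ ≤ log` we get `g ≤ 0`, and a convex function bounded above near `∞` is antitone. Now
  `g (x + 1) ≤ g x` says `e^{ψ x} (e^{1/x} - 1) ≤ 1`, an upper bound for `g` tending to `-1/2`.
* `ψ x - log (x - 1/2)` strictly decreases under `x ↦ x + 1` and tends to `0`, hence is positive,
  that is, `-1/2 < g`. So `g → -1/2`, and a convex function lying above its limit at `∞` is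
  strictly decreasing.
-/

open Set Topology

section Convex

variable {s : Set ℝ} {f : ℝ → ℝ} {l : ℝ}

lemma antitoneOn_of_convexOn_of_isBoundedUnder (hf : ConvexOn ℝ s f) (hs : s ∈ atTop)
    (hbdd : IsBoundedUnder (· ≤ ·) atTop f) : AntitoneOn f s := by
  refine antitoneOn_iff_forall_lt.2 fun x hx y _ hxy => ?_
  by_contra! hlt
  set m := (f y - f x) / (y - x)
  have hm : 0 < m := div_pos (sub_pos.2 hlt) (sub_pos.2 hxy)
  have hline : Tendsto (fun z => f y + m * (z - y)) atTop atTop :=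
    tendsto_atTop_add_const_left _ _
      ((tendsto_atTop_add_const_right _ (-y) tendsto_id).const_mul_atTop hm)
  refine not_isBoundedUnder_of_tendsto_atTop (tendsto_atTop_mono' _ ?_ hline) hbdd
  filter_upwards [hs, eventually_gt_atTop y] with z hz hyz
  have hslope : m ≤ (f z - f y) / (z - y) := hf.slope_mono_adjacent hx hz hxy hyz
  rw [le_div_iff₀ (sub_pos.2 hyz)] at hslope
  linarith

lemma strictAntiOn_of_convexOn_of_tendsto_atTop (hf : ConvexOn ℝ s f) (hs : s ∈ atTop)
    (hlim : Tendsto f atTop (𝓝 l)) (hl : ∀ x ∈ s, l < f x) : StrictAntiOn f s := by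
  intro x hx y hy hxy
  by_contra! hle
  refine (hl y hy).not_ge (ge_of_tendsto hlim ?_)
  filter_upwards [hs, eventually_gt_atTop y] with z hz hyz
  exact hf.le_right_of_left_le'' hx hz hxy hyz.le hle

lemma convexOn_exp_of_hasDerivAt2 {f' f'' : ℝ → ℝ} (hs : Convex ℝ s) (hf : ContinuousOn f s)
    (hf' : ∀ x ∈ interior s, HasDerivAt f (f' x) x)
    (hf'' : ∀ x ∈ interior s, HasDerivAt f' (f'' x) x)
    (hnonneg : ∀ x ∈ interior s, 0 ≤ f' x ^ 2 + f'' x) : ConvexOn ℝ s fun x => exp (f x) := by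
  have hexp' (x) (hx : x ∈ interior s) : HasDerivAt (fun x => exp (f x)) (exp (f x) * f' x) x :=
    (hf' x hx).exp
  have hexp'' (x) (hx : x ∈ interior s) : HasDerivAt (fun x => exp (f x) * f' x)
      (exp (f x) * (f' x ^ 2 + f'' x)) x :=
    ((hexp' x hx).mul (hf'' x hx)).congr_deriv (by ring)
  exact convexOn_of_hasDerivWithinAt2_nonneg hs hf.rexp
    (fun x hx => (hexp' x hx).hasDerivWithinAt) (fun x hx => (hexp'' x hx).hasDerivWithinAt)
    (fun x hx => mul_nonneg (exp_pos _).le (hnonneg x hx))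

lemma convexOn_of_tendsto {ι E : Type*} [AddCommMonoid E] [Module ℝ E] {p : Filter ι} [p.NeBot]
    {s : Set E} {F : ι → E → ℝ} {f : E → ℝ} (hs : Convex ℝ s) (hF : ∀ i, ConvexOn ℝ s (F i))
    (hlim : ∀ x ∈ s, Tendsto (F · x) p (𝓝 (f x))) : ConvexOn ℝ s f :=
  ⟨hs, fun x hx y hy a b ha hb hab => le_of_tendsto_of_tendsto' (hlim _ (hs hx hy ha hb hab))
    (((hlim x hx).const_smul a).add ((hlim y hy).const_smul b))
    fun i => (hF i).2 hx hy ha hb hab⟩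

end Convex

lemma image_Ioi_of_strictAntiOn {α β : Type*} [ConditionallyCompleteLinearOrder α]
    [TopologicalSpace α] [OrderTopology α] [DenselyOrdered α] [NoMaxOrder α]
    [LinearOrder β] [TopologicalSpace β] [OrderClosedTopology β] {f : α → β} {a : α} {l m : β}
    (hf : ContinuousOn f (Ioi a)) (hanti : StrictAntiOn f (Ioi a))
    (ha : Tendsto f (𝓝[>] a) (𝓝 m)) (htop : Tendsto f atTop (𝓝 l)) :
    f '' Ioi a = Ioo l m := by
  have : Nonempty α := ⟨a⟩
  refine Subset.antisymm ?_ (isPreconnected_Ioi.intermediate_value_Ioo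
    (l₂ := 𝓝[>] a) (le_principal_iff.2 (Ioi_mem_atTop a)) inf_le_right hf htop ha)
  rintro _ ⟨x, hx, rfl⟩
  obtain ⟨y, hxy⟩ := exists_gt x
  obtain ⟨z, haz, hzx⟩ := exists_between (mem_Ioi.1 hx)
  have hay : a < y := hx.trans hxy
  have hly : l ≤ f y := le_of_tendsto htop <| by
    filter_upwards [eventually_ge_atTop y] with w hw
    exact hanti.antitoneOn hay (hay.trans_le hw) hw
  have hzm : f z ≤ m := ge_of_tendsto ha <| by
    filter_upwards [Ioo_mem_nhdsGT haz] with w hw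
    exact hanti.antitoneOn hw.1 haz hw.2.le
  exact ⟨hly.trans_lt (hanti hx hay hxy), (hanti haz hx hzx).trans_le hzm⟩

lemma inv_add_half_lt_log_add_one_sub_log {x : ℝ} (hx : 0 < x) :
    (x + 1 / 2)⁻¹ < log (x + 1) - log x :=
  calc (x + 1 / 2)⁻¹ = 2 * x⁻¹ / (x⁻¹ + 2) := by field_simp; ring
    _ < log (1 + x⁻¹) := lt_log_one_add_of_pos (inv_pos.2 hx)
    _ = log ((x + 1) / x) := by rw [add_div, div_self hx.ne', one_div]
    _ = log (x + 1) - log x := log_div (by positivity) hx.ne'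

section Digamma

variable {x : ℝ}

lemma differentiableAt_log_Gamma (hx : 0 < x) :
    DifferentiableAt ℝ (fun x => log (Gamma x)) x :=
  (differentiableAt_Gamma fun m => by linarith [m.cast_nonneg (α := ℝ)]).log
    (Gamma_pos_of_pos hx).ne'

lemma log_Gamma_add_one (hx : 0 < x) : log (Gamma (x + 1)) = log (Gamma x) + log x := by
  rw [Gamma_add_one hx.ne', log_mul hx.ne' (Gamma_pos_of_pos hx).ne', add_comm]

lemma digamma_add_one (hx : 0 < x) : digamma (x + 1) = digamma x + x⁻¹ := by
  unfold digamma
  rw [← deriv_comp_add_const, ← deriv_log,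
    ← deriv_fun_add (differentiableAt_log_Gamma hx) (differentiableAt_log hx.ne')]
  apply EventuallyEq.deriv_eq
  filter_upwards [eventually_gt_nhds hx] with y hy using log_Gamma_add_one hy

lemma digamma_add_natCast (hx : 0 < x) (n : ℕ) :
    digamma (x + n) = digamma x + ∑ k ∈ Finset.range n, (x + k)⁻¹ := by
  induction n with
  | zero => simp
  | succ n ih =>
    rw [Finset.sum_range_succ, ← add_assoc, ← ih, ← digamma_add_one (by positivity),
      Nat.cast_succ, add_assoc]

lemma slope_log_Gamma_add_one (hx : 0 < x) : slope (log ∘ Gamma) x (x + 1) = log x := by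
  simp [slope_def_field, log_Gamma_add_one hx]

lemma digamma_le_log (hx : 0 < x) : digamma x ≤ log x :=
  (convexOn_log_Gamma.deriv_le_slope hx (hx.trans (lt_add_one x)) (lt_add_one x)
    (differentiableAt_log_Gamma hx)).trans_eq (slope_log_Gamma_add_one hx)

lemma log_le_digamma_add_one (hx : 0 < x) : log x ≤ digamma (x + 1) :=
  (slope_log_Gamma_add_one hx).ge.trans <|
    convexOn_log_Gamma.slope_le_deriv hx (hx.trans (lt_add_one x)) (lt_add_one x)
      (differentiableAt_log_Gamma (by positivity))

lemma tendsto_digamma_sub_log_atTop : Tendsto (fun x => digamma x - log x) atTop (𝓝 0) := by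
  have hinv : Tendsto (fun x : ℝ => -x⁻¹) atTop (𝓝 0) := by
    simpa only [neg_zero] using (tendsto_inv_atTop_zero (𝕜 := ℝ)).neg
  refine tendsto_of_tendsto_of_tendsto_of_le_of_le' hinv tendsto_const_nhds ?_ ?_
  · filter_upwards [eventually_gt_atTop 0] with x hx
    linarith [log_le_digamma_add_one hx, digamma_add_one hx]
  · filter_upwards [eventually_gt_atTop 0] with x hx
    exact sub_nonpos.2 (digamma_le_log hx)

lemma log_sub_half_lt_digamma (hx : 1 / 2 < x) : log (x - 1 / 2) < digamma x := by
  set u : ℕ → ℝ := fun n => digamma (x + n) - log (x + n - 1 / 2) with hu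
  have hanti : StrictAnti u := strictAnti_nat_of_succ_lt fun n => by
    have hn : 1 / 2 < x + n := hx.trans_le (le_add_of_nonneg_right n.cast_nonneg)
    have hlog := inv_add_half_lt_log_add_one_sub_log (sub_pos.2 hn)
    rw [sub_add_cancel, sub_add_eq_add_sub] at hlog
    have hdigamma := digamma_add_one (x := x + n) (by linarith)
    simp only [hu, Nat.cast_succ, ← add_assoc, hdigamma]
    linarith
  have hlim : Tendsto u atTop (𝓝 0) := by
    have h := (tendsto_digamma_sub_log_atTop.sub (tendsto_log_comp_add_sub_log (-(1 / 2)))).comp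
      (tendsto_atTop_add_const_left _ x tendsto_natCast_atTop_atTop)
    rw [sub_zero] at h
    refine h.congr fun n => ?_
    simp only [Function.comp_apply, hu, ← sub_eq_add_neg]
    ring
  have hpos : 0 < u 0 := (hanti.antitone.le_of_tendsto hlim 1).trans_lt (hanti zero_lt_one)
  simpa [hu] using hpos

lemma neg_half_lt_exp_digamma_sub_id (x : ℝ) : -(1 / 2) < exp (digamma x) - x := by
  rcases lt_or_ge (1 / 2) x with hx | hx
  · linarith [(log_lt_iff_lt_exp (sub_pos.2 hx)).1 (log_sub_half_lt_digamma hx)]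
  · linarith [exp_pos (digamma x)]

end Digamma

/-- Two inequalities satisfied by the trigamma function `ψ'` and its derivative, for a function `f`
on `(0, ∞)` with first and second derivatives `f'` and `f''` in place of `ψ`. The lower bound on
`f'` is what makes the second inequality stable under `f ↦ f (· + 1) - (·)⁻¹`. -/
structure TrigammaInequalities (f f' f'' : ℝ → ℝ) : Prop where
  hasDerivAt : ∀ x > 0, HasDerivAt f (f' x) x
  hasDerivAt' : ∀ x > 0, HasDerivAt f' (f'' x) x
  le_deriv : ∀ x > 0, x⁻¹ + x⁻¹ ^ 2 / 2 ≤ f' x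
  sq_add_nonneg : ∀ x > 0, 0 ≤ f' x ^ 2 + f'' x

namespace TrigammaInequalities

lemma log_sub_half_inv : TrigammaInequalities (fun x => log x - x⁻¹ / 2)
    (fun x => x⁻¹ + x⁻¹ ^ 2 / 2) (fun x => -x⁻¹ ^ 2 - x⁻¹ ^ 3) where
  hasDerivAt x hx := ((hasDerivAt_log hx.ne').sub
    ((hasDerivAt_inv hx.ne').div_const 2)).congr_deriv (by ring)
  hasDerivAt' x hx := ((hasDerivAt_inv hx.ne').add
    (((hasDerivAt_inv hx.ne').pow 2).div_const 2)).congr_deriv (by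
      simp only [Nat.cast_ofNat, Nat.add_one_sub_one, pow_one]; ring)
  le_deriv _ _ := le_rfl
  sq_add_nonneg x _ := by
    calc (0 : ℝ) ≤ (x⁻¹ ^ 2 / 2) ^ 2 := sq_nonneg _
      _ = (x⁻¹ + x⁻¹ ^ 2 / 2) ^ 2 + (-x⁻¹ ^ 2 - x⁻¹ ^ 3) := by ring

lemma shift {f f' f'' : ℝ → ℝ} (h : TrigammaInequalities f f' f'') :
    TrigammaInequalities (fun x => f (x + 1) - x⁻¹) (fun x => f' (x + 1) + x⁻¹ ^ 2)
      (fun x => f'' (x + 1) - 2 * x⁻¹ ^ 3) := by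
  have hle (x : ℝ) (hx : 0 < x) : x⁻¹ + x⁻¹ ^ 2 / 2 ≤ f' (x + 1) + x⁻¹ ^ 2 := by
    have hinv : x⁻¹ - (x + 1)⁻¹ = x⁻¹ * (x + 1)⁻¹ := by field_simp; ring
    linarith [h.le_deriv (x + 1) (by positivity), sq_nonneg (x⁻¹ - (x + 1)⁻¹)]
  refine ⟨fun x hx => ?_, fun x hx => ?_, hle, fun x hx => ?_⟩
  · exact (((h.hasDerivAt (x + 1) (by positivity)).comp_add_const x 1).sub
      (hasDerivAt_inv hx.ne')).congr_deriv (by ring)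
  · exact (((h.hasDerivAt' (x + 1) (by positivity)).comp_add_const x 1).add
      ((hasDerivAt_inv hx.ne').pow 2)).congr_deriv (by
      simp only [Nat.cast_ofNat, Nat.add_one_sub_one, pow_one]; ring)
  · have hmul := mul_nonneg (sq_nonneg x⁻¹) (sub_nonneg.2 (hle x hx))
    calc 0 ≤ f' (x + 1) ^ 2 + f'' (x + 1) +
          2 * (x⁻¹ ^ 2 * (f' (x + 1) + x⁻¹ ^ 2 - (x⁻¹ + x⁻¹ ^ 2 / 2))) :=
        add_nonneg (h.sq_add_nonneg (x + 1) (by positivity)) (by positivity)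
      _ = (f' (x + 1) + x⁻¹ ^ 2) ^ 2 + (f'' (x + 1) - 2 * x⁻¹ ^ 3) := by ring

lemma convexOn_exp {f f' f'' : ℝ → ℝ} (h : TrigammaInequalities f f' f'') :
    ConvexOn ℝ (Ioi 0) fun x => exp (f x) := by
  have hcont : ContinuousOn f (Ioi 0) := fun x hx =>
    (h.hasDerivAt x hx).continuousAt.continuousWithinAt
  refine convexOn_exp_of_hasDerivAt2 (f' := f') (f'' := f'') (convex_Ioi 0) hcont ?_ ?_ ?_ <;>
    rw [interior_Ioi]
  exacts [h.hasDerivAt, h.hasDerivAt', h.sq_add_nonneg]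

end TrigammaInequalities

/-- The `n`-th approximation of the digamma function: the asymptotic expression `log y - 1/(2y)` of
`ψ y` at `y = x + n`, transported back to `x` by the functional equation `ψ (x + 1) = ψ x + 1/x`. -/
noncomputable def digammaApprox (n : ℕ) (x : ℝ) : ℝ :=
  log (x + n) - (x + n)⁻¹ / 2 - ∑ k ∈ Finset.range n, (x + k)⁻¹

lemma digammaApprox_zero (x : ℝ) : digammaApprox 0 x = log x - x⁻¹ / 2 := by
  simp [digammaApprox]

lemma digammaApprox_succ (n : ℕ) (x : ℝ) :
    digammaApprox (n + 1) x = digammaApprox n (x + 1) - x⁻¹ := by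
  simp only [digammaApprox, Finset.sum_range_succ', Nat.cast_add, Nat.cast_one, Nat.cast_zero,
    add_zero, add_assoc, add_comm (1 : ℝ)]
  ring

lemma tendsto_digammaApprox {x : ℝ} (hx : 0 < x) :
    Tendsto (digammaApprox · x) atTop (𝓝 (digamma x)) := by
  have herr : Tendsto (fun y : ℝ => digamma y - log y + y⁻¹ / 2) atTop (𝓝 0) := by
    simpa using tendsto_digamma_sub_log_atTop.add (tendsto_inv_atTop_zero.div_const 2)
  have h := (herr.comp (tendsto_atTop_add_const_left _ x
    tendsto_natCast_atTop_atTop)).const_sub (digamma x)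
  rw [sub_zero] at h
  refine h.congr fun n => ?_
  simp only [Function.comp_apply, digamma_add_natCast hx n, digammaApprox]
  ring

lemma exists_trigammaInequalities_digammaApprox (n : ℕ) :
    ∃ f' f'', TrigammaInequalities (digammaApprox n) f' f'' := by
  induction n with
  | zero => exact ⟨_, _, funext digammaApprox_zero ▸ TrigammaInequalities.log_sub_half_inv⟩
  | succ n ih =>
    obtain ⟨_, _, h⟩ := ih
    exact ⟨_, _, funext (digammaApprox_succ n) ▸ h.shift⟩

lemma convexOn_exp_digamma : ConvexOn ℝ (Ioi 0) fun x => exp (digamma x) :=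
  convexOn_of_tendsto (convex_Ioi 0)
    (fun n => let ⟨_, _, h⟩ := exists_trigammaInequalities_digammaApprox n; h.convexOn_exp)
    fun _ hx => (tendsto_digammaApprox hx).rexp

lemma convexOn_exp_digamma_sub_id : ConvexOn ℝ (Ioi 0) fun x => exp (digamma x) - x :=
  convexOn_exp_digamma.sub (concaveOn_id (convex_Ioi 0))

lemma antitoneOn_exp_digamma_sub_id : AntitoneOn (fun x => exp (digamma x) - x) (Ioi 0) := by
  refine antitoneOn_of_convexOn_of_isBoundedUnder convexOn_exp_digamma_sub_id (Ioi_mem_atTop 0)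
    (isBoundedUnder_of_eventually_le (a := 0) ?_)
  filter_upwards [eventually_gt_atTop 0] with x hx
  exact sub_nonpos.2 ((le_log_iff_exp_le hx).1 (digamma_le_log hx))

lemma exp_digamma_sub_id_le {x : ℝ} (hx : 0 < x) :
    exp (digamma x) - x ≤ -(2 + x⁻¹)⁻¹ := by
  have hanti : exp (digamma (x + 1)) - (x + 1) ≤ exp (digamma x) - x :=
    antitoneOn_exp_digamma_sub_id hx (hx.trans (lt_add_one x)) (lt_add_one x).le
  rw [digamma_add_one hx, exp_add] at hanti
  have hquad : x⁻¹ + x⁻¹ ^ 2 / 2 ≤ exp x⁻¹ - 1 := by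
    linarith [quadratic_le_exp_of_nonneg (inv_pos.2 hx).le]
  have hmul : exp (digamma x) * (x⁻¹ + x⁻¹ ^ 2 / 2) ≤ 1 :=
    (mul_le_mul_of_nonneg_left hquad (exp_pos _).le).trans (by linarith)
  have hle : exp (digamma x) ≤ 1 / (x⁻¹ + x⁻¹ ^ 2 / 2) := (le_div_iff₀ (by positivity)).2 hmul
  have heq : 1 / (x⁻¹ + x⁻¹ ^ 2 / 2) - x = -(2 + x⁻¹)⁻¹ := by field_simp; ring
  linarith

lemma tendsto_exp_digamma_sub_id_atTop :
    Tendsto (fun x => exp (digamma x) - x) atTop (𝓝 (-(1 / 2))) := by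
  have hupper : Tendsto (fun x : ℝ => -(2 + x⁻¹)⁻¹) atTop (𝓝 (-(1 / 2))) := by
    simpa using ((tendsto_inv_atTop_zero.const_add (2 : ℝ)).inv₀ (by norm_num)).neg
  refine tendsto_of_tendsto_of_tendsto_of_le_of_le' tendsto_const_nhds hupper
    (Eventually.of_forall fun x => (neg_half_lt_exp_digamma_sub_id x).le) ?_
  filter_upwards [eventually_gt_atTop 0] with x hx using exp_digamma_sub_id_le hx

lemma strictAntiOn_exp_digamma_sub_id : StrictAntiOn (fun x => exp (digamma x) - x) (Ioi 0) :=
  strictAntiOn_of_convexOn_of_tendsto_atTop convexOn_exp_digamma_sub_id (Ioi_mem_atTop 0)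
    tendsto_exp_digamma_sub_id_atTop fun x _ => neg_half_lt_exp_digamma_sub_id x

lemma continuousOn_digamma : ContinuousOn digamma (Ioi 0) :=
  ((convexOn_exp_digamma.continuousOn isOpen_Ioi).log fun _ _ => (exp_pos _).ne').congr
    fun _ _ => (log_exp _).symm

/-- For `t > 0` the function `x ↦ e^{ψ(x+t)} - x` is decreasing and convex on `(0, ∞)`,
tends to `e^{ψ(t)}` as `x → 0⁺` and to `t - 1/2` as `x → ∞`, and its range on `(0, ∞)`
is the open interval `(t - 1/2, e^{ψ(t)})`. -/
theorem exp_digamma_sub_id_decreasing_convex (t : ℝ) (ht : 0 < t) :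
    StrictAntiOn (fun x : ℝ => Real.exp (digamma (x + t)) - x) (Set.Ioi (0 : ℝ)) ∧
      ConvexOn ℝ (Set.Ioi (0 : ℝ)) (fun x : ℝ => Real.exp (digamma (x + t)) - x) ∧
      Tendsto (fun x : ℝ => Real.exp (digamma (x + t)) - x)
        (nhdsWithin 0 (Set.Ioi (0 : ℝ))) (nhds (Real.exp (digamma t))) ∧
      Tendsto (fun x : ℝ => Real.exp (digamma (x + t)) - x) atTop (nhds (t - 1 / 2)) ∧
      (fun x : ℝ => Real.exp (digamma (x + t)) - x) '' Set.Ioi (0 : ℝ) =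
        Set.Ioo (t - 1 / 2) (Real.exp (digamma t)) := by
  have hmem {x : ℝ} (hx : 0 ≤ x) : x + t ∈ Ioi 0 := add_pos_of_nonneg_of_pos hx ht
  have hcont : ContinuousOn (fun x => exp (digamma (x + t)) - x) (Ici 0) :=
    ((continuousOn_digamma.comp (by fun_prop) fun _ => hmem).rexp).sub continuousOn_id
  have hanti : StrictAntiOn (fun x => exp (digamma (x + t)) - x) (Ioi 0) := fun x hx y hy hxy => by
    have hlt := strictAntiOn_exp_digamma_sub_id (hmem (le_of_lt hx)) (hmem (le_of_lt hy))
      (add_lt_add_left hxy t)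
    dsimp only at hlt ⊢
    linarith
  have hconv : ConvexOn ℝ (Ioi 0) fun x => exp (digamma (x + t)) - x :=
    ((convexOn_exp_digamma.translate_left t).subset (fun _ hx => add_pos ht hx)
      (convex_Ioi 0)).sub (concaveOn_id (convex_Ioi 0))
  have hzero : Tendsto (fun x => exp (digamma (x + t)) - x) (𝓝[>] 0) (𝓝 (exp (digamma t))) := by
    simpa using ((hcont 0 self_mem_Ici).mono Ioi_subset_Ici_self).tendsto
  have htop : Tendsto (fun x => exp (digamma (x + t)) - x) atTop (𝓝 (t - 1 / 2)) := by
    have h := (tendsto_exp_digamma_sub_id_atTop.comp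
      (tendsto_atTop_add_const_right _ t tendsto_id)).const_add t
    rw [← sub_eq_add_neg] at h
    exact h.congr fun x => by simp only [Function.comp_apply, id]; ring
  exact ⟨hanti, hconv, hzero, htop,
    image_Ioi_of_strictAntiOn (hcont.mono Ioi_subset_Ici_self) hanti hzero htop⟩
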